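/- Let u : ℝ → ℝ be bounded and continuous, let Ω, α ∈ ℝ, and suppose there exists δ > 0 such that Ω + α u(t) ≥ δ for all t ∈ ℝ. Define η(t) = Ω t + α ∫_0^t u(s) ds and let T > 0 be such that η(T) = 2π. Then the family of functions {t ↦ exp(i n η(t)) : n ∈ ℤ}, regarded as elements of the complex Lebesgue space L²((0,T); ℂ), is complete, i.e., the closure of its linear span is all of L²((0,T); ℂ). -/

import Mathlib

open MeasureTheory intervalIntegral Real

/-- Completeness of the family `t ↦ exp (i n (Ω t + α ∫_0^t u))`, `n ∈ ℤ`, in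
`L²((0,T); ℂ)`, where `T > 0` is such that `Ω T + α ∫_0^T u = 2π`, under the
assumption that `u` is bounded continuous and `Ω + α u(t) ≥ δ > 0`. -/
theorem kuramoto_exponentials_complete
    (u : ℝ → ℝ) (hu_cont : Continuous u) (hu_bdd : ∃ M : ℝ, ∀ t : ℝ, |u t| ≤ M)
    (Ω α : ℝ) (δ : ℝ) (hδ : 0 < δ) (hpos : ∀ t : ℝ, δ ≤ Ω + α * u t)
    (η : ℝ → ℝ) (hη : ∀ t : ℝ, η t = Ω * t + α * ∫ s in (0:ℝ)..t, u s)
    (T : ℝ) (hT : 0 < T) (hηT : η T = 2 * π) :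
    (Submodule.span ℂ
        {F : Lp ℂ 2 (volume.restrict (Set.Ioo (0:ℝ) T)) |
          ∃ n : ℤ, ∀ᵐ t ∂(volume.restrict (Set.Ioo (0:ℝ) T)),
            F t = Complex.exp (Complex.I * (n : ℂ) * (η t : ℂ))}).topologicalClosure
      = ⊤ := by
  have hderiv : ∀ t, HasDerivAt η (Ω + α * u t) t := by
    intro t
    have h1 : HasDerivAt (fun t : ℝ => ∫ s in (0:ℝ)..t, u s) (u t) t :=
      integral_hasDerivAt_right (hu_cont.intervalIntegrable _ _)
        (hu_cont.stronglyMeasurableAtFilter _ _) hu_cont.continuousAt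
    have h2 := ((hasDerivAt_id t).const_mul Ω).add (h1.const_mul α)
    have h3 : η = (fun t : ℝ => Ω * t + α * ∫ s in (0:ℝ)..t, u s) := funext hη
    rw [h3]
    rw [mul_one] at h2
    exact h2
  have hcont : Continuous η :=
    continuous_iff_continuousAt.2 fun t => (hderiv t).continuousAt
  have hmono : StrictMono η := strictMono_of_deriv_pos fun t => by
    rw [(hderiv t).deriv]
    exact lt_of_lt_of_le hδ (hpos t)
  have hη0 : η 0 = 0 := by simp [hη]
  haveI : Fact (0 < 2 * π) := ⟨Real.two_pi_pos⟩
  set μ : Measure ℝ := volume.restrict (Set.Ioo (0:ℝ) T) with hμ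
  let q : ℝ → AddCircle (2 * π) := fun t => (η t : AddCircle (2 * π))
  have hq : Continuous q := (AddCircle.continuous_mk' (2 * π)).comp hcont
  obtain ⟨g, hgm, hg⟩ := (hcont.measurableEmbedding hmono.injective).exists_measurable_extend
    measurable_id (fun _ => ⟨(0:ℝ)⟩)
  let r : AddCircle (2 * π) → ℝ :=
    fun x => g (AddCircle.measurableEquivIoc (2 * π) 0 x : ℝ)
  have hr : Measurable r :=
    hgm.comp (measurable_subtype_coe.comp (AddCircle.measurableEquivIoc (2 * π) 0).measurable)
  have hrq : ∀ᵐ t ∂μ, r (q t) = t := by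
    filter_upwards [ae_restrict_mem measurableSet_Ioo] with t ht
    have h0 : 0 < η t := hη0 ▸ hmono ht.1
    have h1 : η t < 2 * π := hηT ▸ hmono ht.2
    have h2 : η t ∈ Set.Ioc (0:ℝ) (0 + 2 * π) := ⟨h0, by linarith⟩
    have h3 : ((AddCircle.measurableEquivIoc (2 * π) 0 (q t)) : ℝ) = η t :=
      AddCircle.equivIoc_coe_of_mem (p := 2 * π) (a := 0) h2
    change g _ = t
    rw [h3]
    exact congrFun hg t
  let ν : Measure (AddCircle (2 * π)) := μ.map q
  haveI : IsFiniteMeasure ν := Measure.isFiniteMeasure_map μ q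
  have hqmp : MeasurePreserving q μ ν := ⟨hq.measurable, rfl⟩
  have hrmp : MeasurePreserving r ν μ := by
    refine ⟨hr, ?_⟩
    rw [Measure.map_map hr hq.measurable]
    calc μ.map (r ∘ q) = μ.map id := Measure.map_congr hrq
      _ = μ := Measure.map_id
  let S : Lp ℂ 2 ν →ₗᵢ[ℂ] Lp ℂ 2 μ := Lp.compMeasurePreservingₗᵢ ℂ q hqmp
  have hSapp : ∀ G : Lp ℂ 2 ν, S G =ᵐ[μ] G ∘ q :=
    fun G => Lp.coeFn_compMeasurePreserving G hqmp
  have hS : Function.Surjective S := by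
    intro F
    refine ⟨Lp.compMeasurePreserving r hrmp F, ?_⟩
    apply Lp.ext
    have h1 := hqmp.quasiMeasurePreserving.ae_eq_comp (Lp.coeFn_compMeasurePreserving F hrmp)
    filter_upwards [hSapp (Lp.compMeasurePreserving r hrmp F), h1, hrq] with t a1 a2 a3
    rw [a1, a2]
    simp only [Function.comp_apply, a3]
  have hd1 := (ContinuousMap.toLp_denseRange (p := 2) ℂ ν ℂ
    (by norm_num)).topologicalClosure_map_submodule
      (span_fourier_closure_eq_top (T := 2 * π))
  have hd2 := DenseRange.topologicalClosure_map_submodule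
    (f := S.toContinuousLinearMap) hS.denseRange hd1
  rw [eq_top_iff, ← hd2]
  apply Submodule.topologicalClosure_mono
  rw [Submodule.map_span, Submodule.map_span, Submodule.span_le]
  rintro _ ⟨_, ⟨_, ⟨n, rfl⟩, rfl⟩, rfl⟩
  apply Submodule.subset_span
  refine ⟨n, ?_⟩
  have h1 := hqmp.quasiMeasurePreserving.ae_eq_comp
    (ContinuousMap.coeFn_toLp (p := 2) (𝕜 := ℂ) ν (fourier (T := 2 * π) n))
  filter_upwards [hSapp (ContinuousMap.toLp (E := ℂ) 2 ν ℂ (fourier n)), h1] with t a1 a2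
  refine a1.trans (a2.trans ?_)
  change fourier n ((η t : ℝ) : AddCircle (2 * π)) = _
  rw [fourier_coe_apply]
  congr 1
  have : (π : ℂ) ≠ 0 := by exact_mod_cast Real.pi_ne_zero
  push_cast
  field_simp
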